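/- arXiv:1601.06636 — 2 statements merged into one kernel-verified Lean document; each statement's English description precedes it below -/
import Mathlib

section
/- The backstepping transformation maps the plant into the target system: Suppose Λʳ, Λˡ are C¹ diagonal matrix functions on [0,1] with positive entries, Sʳ, Sˡ, Sᵒ are continuous, Q₀ ∈ ℝ^{n×m}, the kernels G₂₁: 𝕋 → ℝ^{m×n} and G₂₂: 𝕋 → ℝ^{m×m} are C¹ and satisfy the kernel equations (K1), (K2) and boundary conditions (B1), (B2), and Cʳ: 𝕋 → ℝ^{n×n}, Cˡ: 𝕋 → ℝ^{n×m} are continuous and satisfy Cʳ(x,ξ) = Sˡ(x)G₂₁(x,ξ) + ∫_ξˣ Cˡ(x,η)G₂₁(η,ξ)dη and Cˡ(x,ξ) = Sˡ(x)G₂₂(x,ξ) + ∫_ξˣ Cˡ(x,η)G₂₂(η,ξ)dη. Let (u, v) be a classical C¹ solution of the plant system satisfying u(t,0) = Q₀v(t,0), and define ε(t,x) := u(t,x) and β(t,x) := v(t,x) − ∫₀ˣ [G₂₁(x,ξ)u(t,ξ) + G₂₂(x,ξ)v(t,ξ)] dξ. Then (ε, β) is a classical solution of the target system, i.e. ∂ₜε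 + Λʳ(x)∂ₓε = Sʳ(x)ε + Sˡ(x)β + ∫₀ˣ Cʳ(x,ξ)ε(t,ξ)dξ + ∫₀ˣ Cˡ(x,ξ)β(t,ξ)dξ and ∂ₜβ − Λˡ(x)∂ₓβ = Δ(x)β(t,0) with Δ(x) := G₂₂(x,0)Λˡ(0) − G₂₁(x,0)Λʳ(0)Q₀, and ε(t,0) = Q₀β(t,0). -/
open MeasureTheory Set Matrix Real

section Helpers
set_option linter.unusedSectionVars false
variable {E : Type*} [NormedAddCommGroup E] [NormedSpace ℝ E] [CompleteSpace E]

lemma tri_ext_gen (X : ℝ) (hX : 0 ≤ X) (g : ℝ → ℝ → E)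
    (hg : ContinuousOn (fun p : ℝ × ℝ => g p.1 p.2)
      {p : ℝ × ℝ | 0 ≤ p.2 ∧ p.2 ≤ p.1 ∧ p.1 ≤ X}) :
    ∃ h : ℝ → ℝ → E, Continuous (Function.uncurry h) ∧
      ∀ x ξ, 0 ≤ ξ → ξ ≤ x → x ≤ X → h x ξ = g x ξ := by
  refine ⟨fun x ξ => g (max 0 (min X (max x ξ))) (max 0 (min X ξ)), ?_, ?_⟩
  · refine hg.comp_continuous (f := fun p : ℝ × ℝ =>
      (max 0 (min X (max p.1 p.2)), max 0 (min X p.2))) (by fun_prop) ?_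
    rintro ⟨x, ξ⟩
    refine ⟨le_max_left _ _, ?_, ?_⟩
    · exact max_le_max le_rfl (min_le_min le_rfl (le_max_right _ _))
    · exact max_le hX (min_le_left _ _)
  · intro x ξ h0 h1 h2
    beta_reduce
    rw [max_eq_left h1, min_eq_right h2, min_eq_right (h1.trans h2), max_eq_right h0,
      max_eq_right (h0.trans h1)]

lemma tri_ext (g : ℝ → ℝ → E)
    (hg : ContinuousOn (fun p : ℝ × ℝ => g p.1 p.2)
      {p : ℝ × ℝ | 0 ≤ p.2 ∧ p.2 ≤ p.1 ∧ p.1 ≤ 1}) :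
    ∃ h : ℝ → ℝ → E, Continuous (Function.uncurry h) ∧
      ∀ x ξ, 0 ≤ ξ → ξ ≤ x → x ≤ 1 → h x ξ = g x ξ := tri_ext_gen 1 zero_le_one g hg

lemma strip_ext (g : ℝ → ℝ → E) (X : ℝ) (hX : 0 ≤ X)
    (hg : ContinuousOn (fun p : ℝ × ℝ => g p.1 p.2) (Ici 0 ×ˢ Icc 0 X)) :
    ∃ h : ℝ → ℝ → E, Continuous (Function.uncurry h) ∧
      ∀ t ξ, 0 ≤ t → 0 ≤ ξ → ξ ≤ X → h t ξ = g t ξ := by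
  refine ⟨fun x ξ => g (max 0 x) (max 0 (min X ξ)), ?_, ?_⟩
  · refine hg.comp_continuous (f := fun p : ℝ × ℝ =>
      (max 0 p.1, max 0 (min X p.2))) (by fun_prop) ?_
    rintro ⟨x, ξ⟩
    exact ⟨le_max_left (0:ℝ) x, le_max_left (0:ℝ) (min X ξ), max_le hX (min_le_left _ _)⟩
  · intro x ξ h0 h1 h2
    beta_reduce
    rw [min_eq_right h2, max_eq_right h0, max_eq_right h1]

lemma tri_swap (h : ℝ → ℝ → E) (hc : Continuous (Function.uncurry h)) (y : ℝ) (hy : 0 ≤ y) :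
    ∫ s in (0:ℝ)..y, ∫ ξ in (0:ℝ)..s, h s ξ = ∫ ξ in (0:ℝ)..y, ∫ s in ξ..y, h s ξ := by
  have hsw := intervalIntegral_intervalIntegral_swap (a := 0) (b := y) (c := 0) (d := y)
    (F := fun s ξ => indicator {p : ℝ × ℝ | p.2 ≤ p.1} (Function.uncurry h) (s, ξ)) (by
      have h1 : IntegrableOn (Function.uncurry h) (Icc 0 y ×ˢ Icc 0 y) :=
        hc.continuousOn.integrableOn_compact (isCompact_Icc.prod isCompact_Icc)
      have h2 : IntegrableOn (Function.uncurry h) (uIoc 0 y ×ˢ uIoc 0 y) := by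
        rw [uIoc_of_le hy]
        exact h1.mono_set (prod_mono Ioc_subset_Icc_self Ioc_subset_Icc_self)
      have h3 : MeasurableSet {p : ℝ × ℝ | p.2 ≤ p.1} :=
        measurableSet_le measurable_snd measurable_fst
      have := Integrable.indicator h2 h3
      exact this)
  calc _ = ∫ s in (0:ℝ)..y, ∫ ξ in (0:ℝ)..y,
      indicator {p : ℝ × ℝ | p.2 ≤ p.1} (Function.uncurry h) (s, ξ) := by
        refine intervalIntegral.integral_congr fun s hs => ?_
        rw [uIcc_of_le hy] at hs
        beta_reduce
        rw [intervalIntegral.integral_of_le hs.1, intervalIntegral.integral_of_le hy]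
        have : ∀ ξ, indicator {p : ℝ × ℝ | p.2 ≤ p.1} (Function.uncurry h) (s, ξ)
          = indicator (Iic s) (h s) ξ := by
          intro ξ
          simp only [indicator, mem_ofPred_eq, mem_Iic, Function.uncurry]
        simp_rw [this]
        rw [setIntegral_indicator measurableSet_Iic, Ioc_inter_Iic, min_eq_right hs.2]
    _ = _ := hsw
    _ = _ := by
        refine intervalIntegral.integral_congr fun ξ hs => ?_
        rw [uIcc_of_le hy] at hs
        beta_reduce
        rw [intervalIntegral.integral_of_le hs.2, intervalIntegral.integral_of_le hy,
          ← integral_Icc_eq_integral_Ioc, ← integral_Icc_eq_integral_Ioc]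
        have : ∀ s, indicator {p : ℝ × ℝ | p.2 ≤ p.1} (Function.uncurry h) (s, ξ)
          = indicator (Ici ξ) (fun s => h s ξ) s := by
          intro ξ
          simp only [indicator, mem_ofPred_eq, mem_Ici, Function.uncurry]
        simp_rw [this]
        rw [setIntegral_indicator measurableSet_Ici]
        congr 2
        ext z
        simp only [mem_inter_iff, mem_Icc, mem_Ici]
        constructor
        · rintro ⟨⟨a, b⟩, c⟩; exact ⟨c, b⟩
        · rintro ⟨a, b⟩; exact ⟨⟨hs.1.trans a, b⟩, a⟩

lemma tri_swap_on (h : ℝ → ℝ → E) (y : ℝ) (hy : 0 ≤ y)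
    (hc : ContinuousOn (fun p : ℝ × ℝ => h p.1 p.2)
      {p : ℝ × ℝ | 0 ≤ p.2 ∧ p.2 ≤ p.1 ∧ p.1 ≤ y}) :
    ∫ s in (0:ℝ)..y, ∫ ξ in (0:ℝ)..s, h s ξ = ∫ ξ in (0:ℝ)..y, ∫ s in ξ..y, h s ξ := by
  obtain ⟨k, hkc, hk⟩ := tri_ext_gen y hy h hc
  have := tri_swap k hkc y hy
  calc _ = ∫ s in (0:ℝ)..y, ∫ ξ in (0:ℝ)..s, k s ξ := by
        refine intervalIntegral.integral_congr fun s hs => ?_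
        rw [uIcc_of_le hy] at hs
        refine intervalIntegral.integral_congr fun ξ hξ => ?_
        rw [uIcc_of_le hs.1] at hξ
        exact (hk s ξ hξ.1 hξ.2 hs.2).symm
    _ = _ := this
    _ = _ := by
        refine intervalIntegral.integral_congr fun ξ hξ => ?_
        rw [uIcc_of_le hy] at hξ
        refine intervalIntegral.integral_congr fun s hs => ?_
        rw [uIcc_of_le hξ.2] at hs
        exact hk s ξ hξ.1 hs.1 hs.2

lemma ftc_within (f f' : ℝ → E) (a b : ℝ) (hab : a ≤ b)
    (hd : ∀ x ∈ Icc a b, HasDerivWithinAt f (f' x) (Icc a b) x)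
    (hc : ContinuousOn f' (Icc a b)) : ∫ y in a..b, f' y = f b - f a := by
  refine intervalIntegral.integral_eq_sub_of_hasDerivAt_of_le hab
    (fun x hx => (hd x hx).continuousWithinAt)
    (fun x hx => (hd x (Ioo_subset_Icc_self hx)).hasDerivAt (Icc_mem_nhds hx.1 hx.2))
    (ContinuousOn.intervalIntegrable (by rwa [uIcc_of_le hab]))

lemma leibniz (H Hx : ℝ → ℝ → E)
    (hH : ContinuousOn (fun p : ℝ × ℝ => H p.1 p.2)
      {p : ℝ × ℝ | 0 ≤ p.2 ∧ p.2 ≤ p.1 ∧ p.1 ≤ 1})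
    (hHx : ContinuousOn (fun p : ℝ × ℝ => Hx p.1 p.2)
      {p : ℝ × ℝ | 0 ≤ p.2 ∧ p.2 ≤ p.1 ∧ p.1 ≤ 1})
    (hd : ∀ x ξ : ℝ, 0 ≤ ξ → ξ ≤ x → x ≤ 1 →
      HasDerivWithinAt (fun y => H y ξ) (Hx x ξ) (Icc ξ 1) x)
    (x : ℝ) (hx : x ∈ Icc (0:ℝ) 1) :
    HasDerivWithinAt (fun y => ∫ ξ in (0:ℝ)..y, H y ξ)
      (H x x + ∫ ξ in (0:ℝ)..x, Hx x ξ) (Icc 0 1) x := by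
  obtain ⟨K, hKc, hK⟩ := tri_ext H hH
  obtain ⟨L, hLc, hL⟩ := tri_ext Hx hHx
  have hLc' : Continuous fun p : ℝ × ℝ => L p.1 p.2 := hLc
  have hKd : Continuous fun ξ : ℝ => K ξ ξ := hKc.comp (continuous_id.prodMk continuous_id)
  have hprim : Continuous fun s : ℝ => ∫ ξ in (0:ℝ)..s, L s ξ :=
    intervalIntegral.continuous_parametric_intervalIntegral_of_continuous hLc continuous_id
  have hprim2 : Continuous fun p : ℝ × ℝ => ∫ s in p.2..p.1, L s p.2 := by
    have e : (fun p : ℝ × ℝ => ∫ s in p.2..p.1, L s p.2) = fun p : ℝ × ℝ =>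
        (∫ s in (0:ℝ)..p.1, L s p.2) - ∫ s in (0:ℝ)..p.2, L s p.2 := by
      funext p
      rw [intervalIntegral.integral_interval_sub_left] <;>
      exact Continuous.intervalIntegrable (by fun_prop) _ _
    rw [e]
    refine Continuous.sub ?_ ?_ <;>
    exact intervalIntegral.continuous_parametric_intervalIntegral_of_continuous
      (f := fun (p : ℝ × ℝ) s => L s p.2) (by unfold Function.uncurry; fun_prop) (by fun_prop)
  have key : ∀ y ∈ Icc (0:ℝ) 1, ∫ ξ in (0:ℝ)..y, H y ξ
      = ∫ s in (0:ℝ)..y, (K s s + ∫ ξ in (0:ℝ)..s, L s ξ) := by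
    intro y hy
    rw [intervalIntegral.integral_add (hKd.intervalIntegrable _ _)
      (hprim.intervalIntegrable _ _), tri_swap L hLc y hy.1,
      ← intervalIntegral.integral_add (hKd.intervalIntegrable _ _)]
    · refine intervalIntegral.integral_congr fun ξ hξ => ?_
      rw [uIcc_of_le hy.1] at hξ
      beta_reduce
      have := ftc_within (fun s => H s ξ) (fun s => Hx s ξ) ξ y hξ.2
        (fun s hs => (hd s ξ hξ.1 hs.1 (hs.2.trans hy.2)).mono (Icc_subset_Icc_right hy.2))
        (hHx.comp (f := fun s : ℝ => (s, ξ)) (by fun_prop)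
          fun s hs => ⟨hξ.1, hs.1, hs.2.trans hy.2⟩)
      have e2 : ∫ s in ξ..y, L s ξ = ∫ s in ξ..y, Hx s ξ := by
        refine intervalIntegral.integral_congr fun s hs => ?_
        rw [uIcc_of_le hξ.2] at hs
        exact hL s ξ hξ.1 hs.1 (hs.2.trans hy.2)
      rw [e2, this, hK ξ ξ hξ.1 le_rfl (hξ.2.trans hy.2)]
      abel
    · exact (hprim2.comp (f := fun ξ : ℝ => (y, ξ)) (by fun_prop)).intervalIntegrable _ _
  have hder := ((hKd.add hprim).integral_hasStrictDerivAt 0 x).hasDerivAt.hasDerivWithinAt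
    (s := Icc 0 1)
  refine (hder.congr key (key x hx)).congr_deriv ?_
  simp only [Pi.add_apply]
  rw [hK x x hx.1 le_rfl hx.2]
  congr 1
  refine intervalIntegral.integral_congr fun ξ hξ => ?_
  rw [uIcc_of_le hx.1] at hξ
  exact hL x ξ hξ.1 hξ.2 hx.2

lemma time_deriv (W Wt : ℝ → ℝ → E) (X : ℝ) (hX : 0 ≤ X)
    (hW : ContinuousOn (fun p : ℝ × ℝ => W p.1 p.2) (Ici 0 ×ˢ Icc 0 X))
    (hWt : ContinuousOn (fun p : ℝ × ℝ => Wt p.1 p.2) (Ici 0 ×ˢ Icc 0 X))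
    (hd : ∀ t ξ : ℝ, 0 ≤ t → 0 ≤ ξ → ξ ≤ X →
      HasDerivWithinAt (fun s => W s ξ) (Wt t ξ) (Ici 0) t)
    (t : ℝ) (ht : 0 ≤ t) :
    HasDerivWithinAt (fun s => ∫ ξ in (0:ℝ)..X, W s ξ)
      (∫ ξ in (0:ℝ)..X, Wt t ξ) (Ici 0) t := by
  obtain ⟨K, hKc, hK⟩ := strip_ext W X hX hW
  obtain ⟨L, hLc, hL⟩ := strip_ext Wt X hX hWt
  have hLc' : Continuous fun p : ℝ × ℝ => L p.1 p.2 := hLc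
  have hKc' : Continuous fun p : ℝ × ℝ => K p.1 p.2 := hKc
  have hprim : Continuous fun s : ℝ => ∫ ξ in (0:ℝ)..X, L s ξ :=
    intervalIntegral.continuous_parametric_intervalIntegral_of_continuous' hLc 0 X
  have key : ∀ y ∈ Ici (0:ℝ), ∫ ξ in (0:ℝ)..X, W y ξ
      = (∫ ξ in (0:ℝ)..X, K 0 ξ) + ∫ s in (0:ℝ)..y, (∫ ξ in (0:ℝ)..X, L s ξ) := by
    intro y hy
    have hy : 0 ≤ y := hy
    rw [intervalIntegral_intervalIntegral_swap, ← intervalIntegral.integral_add]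
    · refine intervalIntegral.integral_congr fun ξ hξ => ?_
      rw [uIcc_of_le hX] at hξ
      beta_reduce
      have := ftc_within (fun s => W s ξ) (fun s => Wt s ξ) 0 y hy
        (fun s hs => (hd s ξ hs.1 hξ.1 hξ.2).mono (fun z hz => hz.1))
        (hWt.comp (f := fun s : ℝ => (s, ξ)) (by fun_prop)
          fun s hs => ⟨hs.1, hξ⟩)
      have e2 : ∫ s in 0..y, L s ξ = ∫ s in 0..y, Wt s ξ := by
        refine intervalIntegral.integral_congr fun s hs => ?_
        rw [uIcc_of_le hy] at hs
        exact hL s ξ hs.1 hξ.1 hξ.2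
      rw [e2, this, hK 0 ξ le_rfl hξ.1 hξ.2]
      abel
    · exact Continuous.intervalIntegrable (by fun_prop) _ _
    · refine Continuous.intervalIntegrable ?_ _ _
      exact intervalIntegral.continuous_parametric_intervalIntegral_of_continuous'
        (f := fun ξ s => L s ξ) (by unfold Function.uncurry; fun_prop) 0 y
    · have h1 : IntegrableOn (Function.uncurry L) (Icc 0 y ×ˢ Icc 0 X) :=
        hLc.continuousOn.integrableOn_compact (isCompact_Icc.prod isCompact_Icc)
      rw [uIoc_of_le hy, uIoc_of_le hX]
      exact h1.mono_set (prod_mono Ioc_subset_Icc_self Ioc_subset_Icc_self)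
  have hder := ((hprim.integral_hasStrictDerivAt 0 t).hasDerivAt.hasDerivWithinAt
    (s := Ici 0)).const_add (∫ ξ in (0:ℝ)..X, K 0 ξ)
  refine (hder.congr key (key t ht)).congr_deriv ?_
  refine intervalIntegral.integral_congr fun ξ hξ => ?_
  rw [uIcc_of_le hX] at hξ
  exact hL t ξ ht hξ.1 hξ.2

end Helpers

lemma hasDeriv_mulVec {a b : ℕ} (M : ℝ → Matrix (Fin a) (Fin b) ℝ) (M' : Matrix (Fin a) (Fin b) ℝ)
    (w : ℝ → Fin b → ℝ) (w' : Fin b → ℝ) (s : Set ℝ) (x : ℝ)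
    (hM : ∀ i j, HasDerivWithinAt (fun y => M y i j) (M' i j) s x)
    (hw : HasDerivWithinAt w w' s x) :
    HasDerivWithinAt (fun y => (M y).mulVec (w y)) (M'.mulVec (w x) + (M x).mulVec w') s x := by
  rw [hasDerivWithinAt_pi] at hw ⊢
  intro i
  have := HasDerivWithinAt.fun_sum (u := Finset.univ) fun j _ => (hM i j).mul (hw j)
  refine this.congr_deriv ?_
  simp [mulVec, dotProduct, Finset.sum_add_distrib]

lemma contOn_mulVec {X : Type*} [TopologicalSpace X] {a b : ℕ} {M : X → Matrix (Fin a) (Fin b) ℝ}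
    {w : X → Fin b → ℝ} {s : Set X} (hM : ContinuousOn M s) (hw : ContinuousOn w s) :
    ContinuousOn (fun y => (M y).mulVec (w y)) s := by
  rw [continuousOn_iff_continuous_domRestrict] at *
  exact Continuous.matrix_mulVec hM hw

lemma mulVec_integral {a b : ℕ} (A : Matrix (Fin a) (Fin b) ℝ) (f : ℝ → Fin b → ℝ) (p q : ℝ)
    (hf : IntervalIntegrable f volume p q) :
    A.mulVec (∫ x in p..q, f x) = ∫ x in p..q, A.mulVec (f x) :=
  ((LinearMap.toContinuousLinearMap (Matrix.mulVecLin A)).intervalIntegral_comp_comm hf).symm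

lemma integral_mulVec {a b : ℕ} (A : ℝ → Matrix (Fin a) (Fin b) ℝ) (w : Fin b → ℝ) (p q : ℝ)
    (hpq : p ≤ q) (hA : ContinuousOn A (Icc p q)) :
    (Matrix.of (fun i j => ∫ x in p..q, A x i j)).mulVec w = ∫ x in p..q, (A x).mulVec w := by
  have hc := contOn_mulVec hA (continuousOn_const (c := w))
  have hij : ∀ i j, ContinuousOn (fun x => A x i j) (uIcc p q) := by
    intro i j
    rw [uIcc_of_le hpq]
    exact (continuous_id.matrix_elem i j).comp_continuousOn hA
  funext i
  rw [← uIcc_of_le hpq] at hc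
  have := ((ContinuousLinearMap.proj (R := ℝ) (φ := fun _ : Fin a => ℝ) i).intervalIntegral_comp_comm
    (hc.intervalIntegrable (μ := volume)))
  simp only [ContinuousLinearMap.proj_apply] at this
  rw [← this]
  simp only [mulVec, dotProduct, of_apply]
  rw [intervalIntegral.integral_finsetSum]
  · simp [intervalIntegral.integral_mul_const]
  · intro j _
    exact ((hij i j).mul continuousOn_const).intervalIntegrable

theorem backstepping_transformation_maps_plant_to_target
    (n m : ℕ)
    (lr lr' : Fin n → ℝ → ℝ) (ll ll' : Fin m → ℝ → ℝ)
    (hlrC1 : ∀ i, ContDiffOn ℝ 1 (lr i) (Icc 0 1))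
    (hllC1 : ∀ j, ContDiffOn ℝ 1 (ll j) (Icc 0 1))
    (hlr' : ∀ i, ∀ x ∈ Icc (0:ℝ) 1, HasDerivWithinAt (lr i) (lr' i x) (Icc 0 1) x)
    (hll' : ∀ j, ∀ x ∈ Icc (0:ℝ) 1, HasDerivWithinAt (ll j) (ll' j x) (Icc 0 1) x)
    (hlrpos : ∀ i, ∀ x ∈ Icc (0:ℝ) 1, 0 < lr i x)
    (hllpos : ∀ j, ∀ x ∈ Icc (0:ℝ) 1, 0 < ll j x)
    (Sr : ℝ → Matrix (Fin n) (Fin n) ℝ) (Sl : ℝ → Matrix (Fin n) (Fin m) ℝ)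
    (So : ℝ → Matrix (Fin m) (Fin n) ℝ)
    (hSrc : ContinuousOn Sr (Icc 0 1)) (hSlc : ContinuousOn Sl (Icc 0 1))
    (hSoc : ContinuousOn So (Icc 0 1))
    (Q0 : Matrix (Fin n) (Fin m) ℝ)
    (G21 G21x G21xi : ℝ → ℝ → Matrix (Fin m) (Fin n) ℝ)
    (G22 G22x G22xi : ℝ → ℝ → Matrix (Fin m) (Fin m) ℝ)
    -- the kernels are C¹ on the triangle 𝕋
    (hG21c : ContinuousOn (fun p : ℝ × ℝ => G21 p.1 p.2)
      {p : ℝ × ℝ | 0 ≤ p.2 ∧ p.2 ≤ p.1 ∧ p.1 ≤ 1})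
    (hG22c : ContinuousOn (fun p : ℝ × ℝ => G22 p.1 p.2)
      {p : ℝ × ℝ | 0 ≤ p.2 ∧ p.2 ≤ p.1 ∧ p.1 ≤ 1})
    (hG21xc : ContinuousOn (fun p : ℝ × ℝ => G21x p.1 p.2)
      {p : ℝ × ℝ | 0 ≤ p.2 ∧ p.2 ≤ p.1 ∧ p.1 ≤ 1})
    (hG21xic : ContinuousOn (fun p : ℝ × ℝ => G21xi p.1 p.2)
      {p : ℝ × ℝ | 0 ≤ p.2 ∧ p.2 ≤ p.1 ∧ p.1 ≤ 1})
    (hG22xc : ContinuousOn (fun p : ℝ × ℝ => G22x p.1 p.2)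
      {p : ℝ × ℝ | 0 ≤ p.2 ∧ p.2 ≤ p.1 ∧ p.1 ≤ 1})
    (hG22xic : ContinuousOn (fun p : ℝ × ℝ => G22xi p.1 p.2)
      {p : ℝ × ℝ | 0 ≤ p.2 ∧ p.2 ≤ p.1 ∧ p.1 ≤ 1})
    (hG21d : ∀ x ξ : ℝ, 0 ≤ ξ → ξ ≤ x → x ≤ 1 → ∀ (i : Fin m) (j : Fin n),
      HasDerivWithinAt (fun y => G21 y ξ i j) (G21x x ξ i j) (Icc ξ 1) x ∧
      HasDerivWithinAt (fun η => G21 x η i j) (G21xi x ξ i j) (Icc 0 x) ξ)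
    (hG22d : ∀ x ξ : ℝ, 0 ≤ ξ → ξ ≤ x → x ≤ 1 → ∀ (i : Fin m) (j : Fin m),
      HasDerivWithinAt (fun y => G22 y ξ i j) (G22x x ξ i j) (Icc ξ 1) x ∧
      HasDerivWithinAt (fun η => G22 x η i j) (G22xi x ξ i j) (Icc 0 x) ξ)
    -- the kernel equations (K1), (K2)
    (hK1 : ∀ x ξ : ℝ, 0 ≤ ξ → ξ ≤ x → x ≤ 1 →
      G21xi x ξ * Matrix.diagonal (fun i => lr i ξ)
        - Matrix.diagonal (fun j => ll j x) * G21x x ξ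
      = -(G21 x ξ * Matrix.diagonal fun i => lr' i ξ)
        - G21 x ξ * Sr ξ - G22 x ξ * So ξ)
    (hK2 : ∀ x ξ : ℝ, 0 ≤ ξ → ξ ≤ x → x ≤ 1 →
      G22xi x ξ * Matrix.diagonal (fun j => ll j ξ)
        + Matrix.diagonal (fun j => ll j x) * G22x x ξ
      = -(G22 x ξ * Matrix.diagonal fun j => ll' j ξ) + G21 x ξ * Sl ξ)
    -- the boundary conditions (B1), (B2)
    (hB1 : ∀ x ∈ Icc (0:ℝ) 1,
      G21 x x * Matrix.diagonal (fun i => lr i x)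
        + Matrix.diagonal (fun j => ll j x) * G21 x x = -(So x))
    (hB2 : ∀ x ∈ Icc (0:ℝ) 1,
      Matrix.diagonal (fun j => ll j x) * G22 x x
        = G22 x x * Matrix.diagonal (fun j => ll j x))
    -- the kernels Cʳ, Cˡ and their defining Volterra relations
    (Cr : ℝ → ℝ → Matrix (Fin n) (Fin n) ℝ) (Cl : ℝ → ℝ → Matrix (Fin n) (Fin m) ℝ)
    (hCrc : ContinuousOn (fun p : ℝ × ℝ => Cr p.1 p.2)
      {p : ℝ × ℝ | 0 ≤ p.2 ∧ p.2 ≤ p.1 ∧ p.1 ≤ 1})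
    (hClc : ContinuousOn (fun p : ℝ × ℝ => Cl p.1 p.2)
      {p : ℝ × ℝ | 0 ≤ p.2 ∧ p.2 ≤ p.1 ∧ p.1 ≤ 1})
    (hCrrel : ∀ x ξ : ℝ, 0 ≤ ξ → ξ ≤ x → x ≤ 1 →
      Cr x ξ = Sl x * G21 x ξ
        + Matrix.of (fun i j => ∫ η in ξ..x, (Cl x η * G21 η ξ) i j))
    (hClrel : ∀ x ξ : ℝ, 0 ≤ ξ → ξ ≤ x → x ≤ 1 →
      Cl x ξ = Sl x * G22 x ξ
        + Matrix.of (fun i j => ∫ η in ξ..x, (Cl x η * G22 η ξ) i j))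
    -- a classical C¹ solution (u, v) of the plant system
    (u ut ux : ℝ → ℝ → Fin n → ℝ) (v vt vx : ℝ → ℝ → Fin m → ℝ)
    (huc : ContinuousOn (fun p : ℝ × ℝ => u p.1 p.2) (Ici 0 ×ˢ Icc 0 1))
    (hvc : ContinuousOn (fun p : ℝ × ℝ => v p.1 p.2) (Ici 0 ×ˢ Icc 0 1))
    (hutc : ContinuousOn (fun p : ℝ × ℝ => ut p.1 p.2) (Ici 0 ×ˢ Icc 0 1))
    (huxc : ContinuousOn (fun p : ℝ × ℝ => ux p.1 p.2) (Ici 0 ×ˢ Icc 0 1))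
    (hvtc : ContinuousOn (fun p : ℝ × ℝ => vt p.1 p.2) (Ici 0 ×ˢ Icc 0 1))
    (hvxc : ContinuousOn (fun p : ℝ × ℝ => vx p.1 p.2) (Ici 0 ×ˢ Icc 0 1))
    (hderiv : ∀ t ∈ Ici (0:ℝ), ∀ x ∈ Icc (0:ℝ) 1,
      HasDerivWithinAt (fun s => u s x) (ut t x) (Ici 0) t ∧
      HasDerivWithinAt (fun y => u t y) (ux t x) (Icc 0 1) x ∧
      HasDerivWithinAt (fun s => v s x) (vt t x) (Ici 0) t ∧
      HasDerivWithinAt (fun y => v t y) (vx t x) (Icc 0 1) x)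
    (hplant1 : ∀ t ∈ Ici (0:ℝ), ∀ x ∈ Icc (0:ℝ) 1,
      ut t x + (Matrix.diagonal fun i => lr i x).mulVec (ux t x)
        = (Sr x).mulVec (u t x) + (Sl x).mulVec (v t x))
    (hplant2 : ∀ t ∈ Ici (0:ℝ), ∀ x ∈ Icc (0:ℝ) 1,
      vt t x - (Matrix.diagonal fun j => ll j x).mulVec (vx t x)
        = (So x).mulVec (u t x))
    (hbc0 : ∀ t ∈ Ici (0:ℝ), u t 0 = Q0.mulVec (v t 0))
    -- the backstepping transformation: ε := u and β as below
    (ε : ℝ → ℝ → Fin n → ℝ) (β : ℝ → ℝ → Fin m → ℝ)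
    (hεdef : ∀ t x : ℝ, ε t x = u t x)
    (hβdef : ∀ t x : ℝ, β t x = v t x
      - ∫ ξ in (0:ℝ)..x, ((G21 x ξ).mulVec (u t ξ) + (G22 x ξ).mulVec (v t ξ))) :
    -- (ε, β) is a classical solution of the target system
    ∃ βt βx : ℝ → ℝ → Fin m → ℝ,
      (∀ t ∈ Ici (0:ℝ), ∀ x ∈ Icc (0:ℝ) 1,
        HasDerivWithinAt (fun s => β s x) (βt t x) (Ici 0) t ∧
        HasDerivWithinAt (fun y => β t y) (βx t x) (Icc 0 1) x) ∧
      (∀ t ∈ Ici (0:ℝ), ∀ x ∈ Icc (0:ℝ) 1,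
        ut t x + (Matrix.diagonal fun i => lr i x).mulVec (ux t x)
          = (Sr x).mulVec (ε t x) + (Sl x).mulVec (β t x)
            + (∫ ξ in (0:ℝ)..x, (Cr x ξ).mulVec (ε t ξ))
            + ∫ ξ in (0:ℝ)..x, (Cl x ξ).mulVec (β t ξ)) ∧
      (∀ t ∈ Ici (0:ℝ), ∀ x ∈ Icc (0:ℝ) 1,
        βt t x - (Matrix.diagonal fun j => ll j x).mulVec (βx t x)
          = ((G22 x 0 * Matrix.diagonal (fun j' => ll j' 0)
              - G21 x 0 * Matrix.diagonal (fun i' => lr i' 0) * Q0)).mulVec (β t 0)) ∧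
      (∀ t ∈ Ici (0:ℝ), ε t 0 = Q0.mulVec (β t 0)) := by
  have hHd : ∀ t ∈ Ici (0:ℝ), ∀ x ∈ Icc (0:ℝ) 1,
      HasDerivWithinAt
        (fun y => ∫ ξ in (0:ℝ)..y, ((G21 y ξ).mulVec (u t ξ) + (G22 y ξ).mulVec (v t ξ)))
        (((G21 x x).mulVec (u t x) + (G22 x x).mulVec (v t x))
          + ∫ ξ in (0:ℝ)..x, ((G21x x ξ).mulVec (u t ξ) + (G22x x ξ).mulVec (v t ξ)))
        (Icc 0 1) x := by
    intro t ht x hx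
    have hu2 : ContinuousOn (fun p : ℝ × ℝ => u t p.2)
        {p : ℝ × ℝ | 0 ≤ p.2 ∧ p.2 ≤ p.1 ∧ p.1 ≤ 1} :=
      huc.comp (f := fun p : ℝ × ℝ => (t, p.2)) (by fun_prop)
        fun p hp => ⟨ht, hp.1, hp.2.1.trans hp.2.2⟩
    have hv2 : ContinuousOn (fun p : ℝ × ℝ => v t p.2)
        {p : ℝ × ℝ | 0 ≤ p.2 ∧ p.2 ≤ p.1 ∧ p.1 ≤ 1} :=
      hvc.comp (f := fun p : ℝ × ℝ => (t, p.2)) (by fun_prop)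
        fun p hp => ⟨ht, hp.1, hp.2.1.trans hp.2.2⟩
    refine leibniz (fun y ξ => (G21 y ξ).mulVec (u t ξ) + (G22 y ξ).mulVec (v t ξ))
      (fun y ξ => (G21x y ξ).mulVec (u t ξ) + (G22x y ξ).mulVec (v t ξ))
      ((contOn_mulVec hG21c hu2).add (contOn_mulVec hG22c hv2))
      ((contOn_mulVec hG21xc hu2).add (contOn_mulVec hG22xc hv2)) ?_ x hx
    intro y ξ h0 h1 h2
    have a1 := hasDeriv_mulVec (fun y => G21 y ξ) (G21x y ξ) (fun _ => u t ξ) 0 (Icc ξ 1) y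
      (fun i j => (hG21d y ξ h0 h1 h2 i j).1) (hasDerivWithinAt_const _ _ _)
    have a2 := hasDeriv_mulVec (fun y => G22 y ξ) (G22x y ξ) (fun _ => v t ξ) 0 (Icc ξ 1) y
      (fun i j => (hG22d y ξ h0 h1 h2 i j).1) (hasDerivWithinAt_const _ _ _)
    refine (a1.add a2).congr_deriv ?_
    simp
  have hHt : ∀ t ∈ Ici (0:ℝ), ∀ x ∈ Icc (0:ℝ) 1,
      HasDerivWithinAt
        (fun s => ∫ ξ in (0:ℝ)..x, ((G21 x ξ).mulVec (u s ξ) + (G22 x ξ).mulVec (v s ξ)))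
        (∫ ξ in (0:ℝ)..x, ((G21 x ξ).mulVec (ut t ξ) + (G22 x ξ).mulVec (vt t ξ)))
        (Ici 0) t := by
    intro t ht x hx
    have hsub : (Ici (0:ℝ) ×ˢ Icc (0:ℝ) x) ⊆ Ici (0:ℝ) ×ˢ Icc (0:ℝ) 1 :=
      prod_mono_right (Icc_subset_Icc_right hx.2)
    have g1 : ContinuousOn (fun p : ℝ × ℝ => G21 x p.2) (Ici (0:ℝ) ×ˢ Icc (0:ℝ) x) :=
      hG21c.comp (f := fun p : ℝ × ℝ => (x, p.2)) (by fun_prop)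
        fun p hp => ⟨hp.2.1, hp.2.2, hx.2⟩
    have g2 : ContinuousOn (fun p : ℝ × ℝ => G22 x p.2) (Ici (0:ℝ) ×ˢ Icc (0:ℝ) x) :=
      hG22c.comp (f := fun p : ℝ × ℝ => (x, p.2)) (by fun_prop)
        fun p hp => ⟨hp.2.1, hp.2.2, hx.2⟩
    refine time_deriv (fun s ξ => (G21 x ξ).mulVec (u s ξ) + (G22 x ξ).mulVec (v s ξ))
      (fun s ξ => (G21 x ξ).mulVec (ut s ξ) + (G22 x ξ).mulVec (vt s ξ)) x hx.1
      ((contOn_mulVec g1 (huc.mono hsub)).add (contOn_mulVec g2 (hvc.mono hsub)))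
      ((contOn_mulVec g1 (hutc.mono hsub)).add (contOn_mulVec g2 (hvtc.mono hsub))) ?_ t ht
    intro s ξ hs h0 h1
    have hd := hderiv s hs ξ ⟨h0, h1.trans hx.2⟩
    have a1 := hasDeriv_mulVec (fun _ => G21 x ξ) 0 (fun s => u s ξ) _ (Ici 0) s
      (fun i j => hasDerivWithinAt_const _ _ _) hd.1
    have a2 := hasDeriv_mulVec (fun _ => G22 x ξ) 0 (fun s => v s ξ) _ (Ici 0) s
      (fun i j => hasDerivWithinAt_const _ _ _) hd.2.2.1
    refine (a1.add a2).congr_deriv ?_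
    simp
  have hβ0 : ∀ t, β t 0 = v t 0 := by
    intro t
    rw [hβdef]
    simp
  refine ⟨fun t x => vt t x
      - ∫ ξ in (0:ℝ)..x, ((G21 x ξ).mulVec (ut t ξ) + (G22 x ξ).mulVec (vt t ξ)),
    fun t x => vx t x - (((G21 x x).mulVec (u t x) + (G22 x x).mulVec (v t x))
          + ∫ ξ in (0:ℝ)..x, ((G21x x ξ).mulVec (u t ξ) + (G22x x ξ).mulVec (v t ξ))),
    ?_, ?_, ?_, ?_⟩
  · intro t ht x hx
    have hd := hderiv t ht x hx
    constructor
    · simp only [hβdef]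
      exact hd.2.2.1.sub (hHt t ht x hx)
    · simp only [hβdef]
      exact hd.2.2.2.sub (hHd t ht x hx)
  · intro t ht x hx
    rw [hplant1 t ht x hx]
    have hsub : Icc (0:ℝ) x ⊆ Icc 0 1 := Icc_subset_Icc_right hx.2
    have cu : ContinuousOn (u t) (Icc 0 x) :=
      huc.comp (f := fun ξ : ℝ => (t, ξ)) (by fun_prop) fun ξ hξ => ⟨ht, hsub hξ⟩
    have cv : ContinuousOn (v t) (Icc 0 x) :=
      hvc.comp (f := fun ξ : ℝ => (t, ξ)) (by fun_prop) fun ξ hξ => ⟨ht, hsub hξ⟩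
    have sec : ∀ {a b : ℕ} {M : ℝ → ℝ → Matrix (Fin a) (Fin b) ℝ},
        ContinuousOn (fun p : ℝ × ℝ => M p.1 p.2)
          {p : ℝ × ℝ | 0 ≤ p.2 ∧ p.2 ≤ p.1 ∧ p.1 ≤ 1} → ContinuousOn (M x) (Icc 0 x) := by
      intro a b M hM
      exact hM.comp (f := fun ξ : ℝ => (x, ξ)) (by fun_prop) fun ξ hξ => ⟨hξ.1, hξ.2, hx.2⟩
    have sec2 : ∀ {a b : ℕ} {M : ℝ → ℝ → Matrix (Fin a) (Fin b) ℝ},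
        ContinuousOn (fun p : ℝ × ℝ => M p.1 p.2)
          {p : ℝ × ℝ | 0 ≤ p.2 ∧ p.2 ≤ p.1 ∧ p.1 ≤ 1} →
          ∀ η ∈ Icc (0:ℝ) x, ContinuousOn (fun s => M s η) (Icc η x) := by
      intro a b M hM η hη
      exact hM.comp (f := fun ξ : ℝ => (ξ, η)) (by fun_prop)
        fun ξ hξ => ⟨hη.1, hξ.1, hξ.2.trans hx.2⟩
    have ii : ∀ {a : ℕ} {f : ℝ → Fin a → ℝ}, ContinuousOn f (Icc 0 x) →
        IntervalIntegrable f volume 0 x := by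
      intro a f hf
      exact ContinuousOn.intervalIntegrable (by rwa [uIcc_of_le hx.1])
    have cCr := contOn_mulVec (sec hCrc) cu
    have cCl := contOn_mulVec (sec hClc) cv
    have cH := (contOn_mulVec (sec hG21c) cu).fun_add (contOn_mulVec (sec hG22c) cv)
    have cI : ContinuousOn (fun y => ∫ ξ in (0:ℝ)..y,
        ((G21 y ξ).mulVec (u t ξ) + (G22 y ξ).mulVec (v t ξ))) (Icc 0 x) :=
      fun y hy => ((hHd t ht y (hsub hy)).continuousWithinAt).mono hsub
    have e1 : ∫ ξ in (0:ℝ)..x, (Cl x ξ).mulVec (β t ξ)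
        = (∫ ξ in (0:ℝ)..x, (Cl x ξ).mulVec (v t ξ))
          - ∫ s in (0:ℝ)..x, (Cl x s).mulVec (∫ ξ in (0:ℝ)..s,
            ((G21 s ξ).mulVec (u t ξ) + (G22 s ξ).mulVec (v t ξ))) := by
      rw [← intervalIntegral.integral_sub (ii cCl) (ii (contOn_mulVec (sec hClc) cI))]
      refine intervalIntegral.integral_congr fun ξ _ => ?_
      beta_reduce
      rw [hβdef, mulVec_sub]
    have e2 : ∫ s in (0:ℝ)..x, (Cl x s).mulVec (∫ ξ in (0:ℝ)..s,
            ((G21 s ξ).mulVec (u t ξ) + (G22 s ξ).mulVec (v t ξ)))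
        = ∫ s in (0:ℝ)..x, ∫ ξ in (0:ℝ)..s,
            (Cl x s).mulVec ((G21 s ξ).mulVec (u t ξ) + (G22 s ξ).mulVec (v t ξ)) := by
      refine intervalIntegral.integral_congr fun s hs => ?_
      rw [uIcc_of_le hx.1] at hs
      refine mulVec_integral _ _ _ _ (ContinuousOn.intervalIntegrable ?_)
      rw [uIcc_of_le hs.1]
      have hs2 : Icc (0:ℝ) s ⊆ Icc 0 x := Icc_subset_Icc_right hs.2
      refine (contOn_mulVec ?_ (cu.mono hs2)).add (contOn_mulVec ?_ (cv.mono hs2))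
      · exact hG21c.comp (f := fun ξ : ℝ => (s, ξ)) (by fun_prop)
          fun ξ hξ => ⟨hξ.1, hξ.2, hs.2.trans hx.2⟩
      · exact hG22c.comp (f := fun ξ : ℝ => (s, ξ)) (by fun_prop)
          fun ξ hξ => ⟨hξ.1, hξ.2, hs.2.trans hx.2⟩
    have e3 := tri_swap_on (fun s ξ => (Cl x s).mulVec
      ((G21 s ξ).mulVec (u t ξ) + (G22 s ξ).mulVec (v t ξ))) x hx.1 (by
        have hs3 : {p : ℝ × ℝ | 0 ≤ p.2 ∧ p.2 ≤ p.1 ∧ p.1 ≤ x} ⊆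
          {p : ℝ × ℝ | 0 ≤ p.2 ∧ p.2 ≤ p.1 ∧ p.1 ≤ 1} :=
          fun p hp => ⟨hp.1, hp.2.1, hp.2.2.trans hx.2⟩
        refine contOn_mulVec ((sec hClc).comp (by fun_prop)
          fun p hp => ⟨hp.1.trans hp.2.1, hp.2.2⟩)
          ((contOn_mulVec (hG21c.mono hs3) (cu.comp (by fun_prop)
          fun p hp => ⟨hp.1, hp.2.1.trans hp.2.2⟩)).add
          (contOn_mulVec (hG22c.mono hs3) (cv.comp (by fun_prop)
          fun p hp => ⟨hp.1, hp.2.1.trans hp.2.2⟩))))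
    have e4 : ∫ ξ in (0:ℝ)..x, ∫ s in ξ..x, (Cl x s).mulVec
          ((G21 s ξ).mulVec (u t ξ) + (G22 s ξ).mulVec (v t ξ))
        = ∫ ξ in (0:ℝ)..x, ((Cr x ξ).mulVec (u t ξ) + (Cl x ξ).mulVec (v t ξ)
          - (Sl x).mulVec ((G21 x ξ).mulVec (u t ξ) + (G22 x ξ).mulVec (v t ξ))) := by
      refine intervalIntegral.integral_congr fun ξ hξ => ?_
      rw [uIcc_of_le hx.1] at hξ
      beta_reduce
      have cC : ContinuousOn (fun s => Cl x s) (Icc ξ x) :=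
        (sec hClc).mono (Icc_subset_Icc_left hξ.1)
      have c1 : ContinuousOn (fun s => Cl x s * G21 s ξ) (Icc ξ x) := by
        have := sec2 hG21c ξ hξ
        rw [continuousOn_iff_continuous_domRestrict] at *
        exact cC.matrix_mul this
      have c2 : ContinuousOn (fun s => Cl x s * G22 s ξ) (Icc ξ x) := by
        have := sec2 hG22c ξ hξ
        rw [continuousOn_iff_continuous_domRestrict] at *
        exact cC.matrix_mul this
      have r1 := congrArg (fun M => M.mulVec (u t ξ)) (hCrrel x ξ hξ.1 hξ.2 hx.2)
      have r2 := congrArg (fun M => M.mulVec (v t ξ)) (hClrel x ξ hξ.1 hξ.2 hx.2)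
      beta_reduce at r1 r2
      rw [add_mulVec, integral_mulVec _ _ _ _ hξ.2 c1] at r1
      rw [add_mulVec, integral_mulVec _ _ _ _ hξ.2 c2] at r2
      rw [r1, r2]
      simp only [mulVec_add, mulVec_mulVec]
      rw [intervalIntegral.integral_add]
      · abel
      · refine ContinuousOn.intervalIntegrable ?_
        rw [uIcc_of_le hξ.2]
        exact contOn_mulVec c1 continuousOn_const
      · refine ContinuousOn.intervalIntegrable ?_
        rw [uIcc_of_le hξ.2]
        exact contOn_mulVec c2 continuousOn_const
    have e5 : ∫ ξ in (0:ℝ)..x, ((Cr x ξ).mulVec (u t ξ) + (Cl x ξ).mulVec (v t ξ)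
          - (Sl x).mulVec ((G21 x ξ).mulVec (u t ξ) + (G22 x ξ).mulVec (v t ξ)))
        = (∫ ξ in (0:ℝ)..x, (Cr x ξ).mulVec (u t ξ)) + (∫ ξ in (0:ℝ)..x, (Cl x ξ).mulVec (v t ξ))
          - (Sl x).mulVec (∫ ξ in (0:ℝ)..x,
            ((G21 x ξ).mulVec (u t ξ) + (G22 x ξ).mulVec (v t ξ))) := by
      rw [mulVec_integral _ _ _ _ (ii cH), intervalIntegral.integral_sub
        (ii (cCr.fun_add cCl)) (ii (contOn_mulVec continuousOn_const cH)),
        intervalIntegral.integral_add (ii cCr) (ii cCl)]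
    rw [e1, e2, e3, e4, e5]
    simp only [hεdef]
    rw [hβdef, mulVec_sub]
    abel
  · intro t ht x hx
    beta_reduce
    have hsub : Icc (0:ℝ) x ⊆ Icc 0 1 := Icc_subset_Icc_right hx.2
    have slice : ∀ {a : ℕ} {w : ℝ → ℝ → Fin a → ℝ},
        ContinuousOn (fun p : ℝ × ℝ => w p.1 p.2) (Ici 0 ×ˢ Icc 0 1) →
        ContinuousOn (w t) (Icc 0 x) := by
      intro a w hw
      exact hw.comp (f := fun ξ : ℝ => (t, ξ)) (by fun_prop) fun ξ hξ => ⟨ht, hsub hξ⟩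
    have sec : ∀ {a b : ℕ} {M : ℝ → ℝ → Matrix (Fin a) (Fin b) ℝ},
        ContinuousOn (fun p : ℝ × ℝ => M p.1 p.2)
          {p : ℝ × ℝ | 0 ≤ p.2 ∧ p.2 ≤ p.1 ∧ p.1 ≤ 1} → ContinuousOn (M x) (Icc 0 x) := by
      intro a b M hM
      exact hM.comp (f := fun ξ : ℝ => (x, ξ)) (by fun_prop) fun ξ hξ => ⟨hξ.1, hξ.2, hx.2⟩
    have ii : ∀ {a : ℕ} {f : ℝ → Fin a → ℝ}, ContinuousOn f (Icc 0 x) →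
        IntervalIntegrable f volume 0 x := by
      intro a f hf
      exact ContinuousOn.intervalIntegrable (by rwa [uIcc_of_le hx.1])
    have cT := (contOn_mulVec (sec hG21c) (slice hutc)).fun_add
      (contOn_mulVec (sec hG22c) (slice hvtc))
    have cX := (contOn_mulVec (sec hG21xc) (slice huc)).fun_add
      (contOn_mulVec (sec hG22xc) (slice hvc))
    have cLX := contOn_mulVec
      (continuousOn_const (c := Matrix.diagonal fun j => ll j x) (s := Icc 0 x)) cX
    have key := ftc_within
      (fun ξ => (G22 x ξ).mulVec ((Matrix.diagonal fun j => ll j ξ).mulVec (v t ξ))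
        - (G21 x ξ).mulVec ((Matrix.diagonal fun i => lr i ξ).mulVec (u t ξ)))
      (fun ξ => ((G21 x ξ).mulVec (ut t ξ) + (G22 x ξ).mulVec (vt t ξ))
        - (Matrix.diagonal fun j => ll j x).mulVec
          ((G21x x ξ).mulVec (u t ξ) + (G22x x ξ).mulVec (v t ξ))) 0 x hx.1 (by
        intro ξ hξ
        have hd := hderiv t ht ξ (hsub hξ)
        have dl := hasDeriv_mulVec (fun ξ => Matrix.diagonal fun j => ll j ξ)
          (Matrix.diagonal fun j => ll' j ξ) (v t) _ (Icc 0 x) ξ (by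
            intro i j
            by_cases hij : i = j
            · subst hij
              simpa using (hll' i ξ (hsub hξ)).mono hsub
            · simpa [Matrix.diagonal_apply_ne _ hij] using hasDerivWithinAt_const _ _ _)
            (hd.2.2.2.mono hsub)
        have dr := hasDeriv_mulVec (fun ξ => Matrix.diagonal fun j => lr j ξ)
          (Matrix.diagonal fun j => lr' j ξ) (u t) _ (Icc 0 x) ξ (by
            intro i j
            by_cases hij : i = j
            · subst hij
              simpa using (hlr' i ξ (hsub hξ)).mono hsub
            · simpa [Matrix.diagonal_apply_ne _ hij] using hasDerivWithinAt_const _ _ _)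
            (hd.2.1.mono hsub)
        have d2 := hasDeriv_mulVec (fun ξ => G22 x ξ) (G22xi x ξ) _ _ (Icc 0 x) ξ
          (fun i j => (hG22d x ξ hξ.1 hξ.2 hx.2 i j).2) dl
        have d1 := hasDeriv_mulVec (fun ξ => G21 x ξ) (G21xi x ξ) _ _ (Icc 0 x) ξ
          (fun i j => (hG21d x ξ hξ.1 hξ.2 hx.2 i j).2) dr
        refine (d2.sub d1).congr_deriv ?_
        have k1 := congrArg (fun M => M.mulVec (u t ξ)) (hK1 x ξ hξ.1 hξ.2 hx.2)
        have k2 := congrArg (fun M => M.mulVec (v t ξ)) (hK2 x ξ hξ.1 hξ.2 hx.2)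
        have p1 := eq_sub_of_add_eq (hplant1 t ht ξ (hsub hξ))
        have p2 := eq_add_of_sub_eq (hplant2 t ht ξ (hsub hξ))
        rw [p1, p2]
        simp only [sub_mulVec, add_mulVec, neg_mulVec, mulVec_add, mulVec_sub,
          ← mulVec_mulVec] at k1 k2 ⊢
        linear_combination (exp := 1) k2 - k1)
      (cT.sub cLX)
    rw [intervalIntegral.integral_sub (ii cT) (ii cLX), ← mulVec_integral _ _ _ _ (ii cX)] at key
    have b1 := congrArg (fun M => M.mulVec (u t x)) (hB1 x hx)
    have b2 := congrArg (fun M => M.mulVec (v t x)) (hB2 x hx)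
    have p2 := eq_add_of_sub_eq (hplant2 t ht x hx)
    rw [hβ0, p2]
    beta_reduce at key
    rw [hbc0 t ht] at key
    simp only [sub_mulVec, add_mulVec, neg_mulVec, mulVec_add, mulVec_sub,
          ← mulVec_mulVec] at b1 b2 key ⊢
    linear_combination (exp := 1) b1 + b2 - key
  · intro t ht
    rw [hεdef, hβ0, hbc0 t ht]
end

section
/- Bound on the Volterra double-integral term: Let n, p ≥ 1, ν > 0, M > 0, let K: 𝕋 → ℝ^{n×p} be continuous with ‖K(x,ξ)‖ ≤ M for all (x,ξ) ∈ 𝕋 (‖·‖ the matrix 2-norm), and let a ∈ C([0,1]; ℝⁿ), b ∈ C([0,1]; ℝᵖ). Then | ∫₀¹ e^{−νx} a(x)ᵀ ( ∫₀ˣ K(x,ξ) b(ξ) dξ ) dx | ≤ (M/2) ( ∫₀¹ e^{−νx} |a(x)|² dx + (1/ν) ∫₀¹ |b(ξ)|² dξ ). -/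
open MeasureTheory Set Matrix Real

/-- The operator (matrix 2-) norm of a real matrix, i.e. the operator norm of the
induced linear map between Euclidean spaces. -/
noncomputable def l2OpNorm {m n : ℕ} (A : Matrix (Fin m) (Fin n) ℝ) : ℝ :=
  ‖LinearMap.toContinuousLinearMap
    (Matrix.toEuclideanLin A : EuclideanSpace ℝ (Fin n) →ₗ[ℝ] EuclideanSpace ℝ (Fin m))‖

theorem dot_mulVec_bound {n p : ℕ} (A : Matrix (Fin n) (Fin p) ℝ) (M : ℝ)
    (hM : 0 < M) (hA : l2OpNorm A ≤ M) (u : Fin n → ℝ) (v : Fin p → ℝ) :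
    |u ⬝ᵥ A.mulVec v| ≤ (M / 2) * ((∑ i, (u i) ^ 2) + ∑ j, (v j) ^ 2) := by
  have h1 : u ⬝ᵥ A.mulVec v
      = inner ℝ (WithLp.toLp 2 u) (Matrix.toEuclideanLin A (WithLp.toLp 2 v)) := by
    simp [Matrix.toEuclideanLin, PiLp.inner_apply, dotProduct, mul_comm]
  have h2 : ‖Matrix.toEuclideanLin A (WithLp.toLp 2 v)‖ ≤ M * ‖WithLp.toLp 2 v‖ :=
    (LinearMap.toContinuousLinearMap (Matrix.toEuclideanLin A)).le_of_opNorm_le hA _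
  have hu : ∑ i, (u i) ^ 2 = ‖WithLp.toLp 2 u‖ ^ 2 := by
    simp [EuclideanSpace.norm_sq_eq]
  have hv : ∑ i, (v i) ^ 2 = ‖WithLp.toLp 2 v‖ ^ 2 := by
    simp [EuclideanSpace.norm_sq_eq]
  rw [h1, hu, hv]
  refine (abs_real_inner_le_norm _ _).trans ?_
  have h3 := mul_le_mul_of_nonneg_left h2 (norm_nonneg (WithLp.toLp 2 u))
  nlinarith [mul_nonneg hM.le (sq_nonneg (‖WithLp.toLp 2 u‖ - ‖WithLp.toLp 2 v‖))]

theorem dot_integral_comm {n : ℕ} (u : Fin n → ℝ) (f : ℝ → Fin n → ℝ) (x : ℝ)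
    (hf : IntervalIntegrable f volume 0 x) :
    u ⬝ᵥ (∫ ξ in (0:ℝ)..x, f ξ) = ∫ ξ in (0:ℝ)..x, u ⬝ᵥ f ξ := by
  let L : (Fin n → ℝ) →L[ℝ] ℝ := ∑ i, u i • ContinuousLinearMap.proj i
  have hL : ∀ w, L w = u ⬝ᵥ w := by
    intro w
    simp [L, dotProduct]
  have := L.intervalIntegral_comp_comm hf
  simp only [hL] at this
  exact this.symm

theorem volterra_double_integral_bound
    (n p : ℕ) (hn : 1 ≤ n) (hp : 1 ≤ p)
    (ν M : ℝ) (hν : 0 < ν) (hM : 0 < M)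
    (K : ℝ → ℝ → Matrix (Fin n) (Fin p) ℝ)
    (hKc : ContinuousOn (fun q : ℝ × ℝ => K q.1 q.2)
      {q : ℝ × ℝ | 0 ≤ q.2 ∧ q.2 ≤ q.1 ∧ q.1 ≤ 1})
    (hKM : ∀ x ξ : ℝ, 0 ≤ ξ → ξ ≤ x → x ≤ 1 → l2OpNorm (K x ξ) ≤ M)
    (a : ℝ → Fin n → ℝ) (b : ℝ → Fin p → ℝ)
    (ha : ContinuousOn a (Icc 0 1)) (hb : ContinuousOn b (Icc 0 1)) :
    |∫ x in (0:ℝ)..1, Real.exp (-ν * x) *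
        (a x ⬝ᵥ ∫ ξ in (0:ℝ)..x, (K x ξ).mulVec (b ξ))|
      ≤ (M / 2) * ((∫ x in (0:ℝ)..1, Real.exp (-ν * x) * ∑ i, (a x i) ^ 2)
          + (1 / ν) * ∫ ξ in (0:ℝ)..1, ∑ j, (b ξ j) ^ 2) := by
  have haS : ContinuousOn (fun x => ∑ i, (a x i) ^ 2) (Icc 0 1) :=
    continuousOn_finsetSum _ fun i _ => ((continuousOn_pi.1 ha) i).pow 2
  have hbS : ContinuousOn (fun x => ∑ i, (b x i) ^ 2) (Icc 0 1) :=
    continuousOn_finsetSum _ fun i _ => ((continuousOn_pi.1 hb) i).pow 2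
  have hbI : IntervalIntegrable (fun x => ∑ i, (b x i) ^ 2) volume 0 1 :=
    hbS.intervalIntegrable_of_Icc zero_le_one
  have hexp : Continuous fun x : ℝ => Real.exp (-ν * x) := by fun_prop
  set B : ℝ := ∫ ξ in (0:ℝ)..1, ∑ j, (b ξ j) ^ 2 with hB
  have hB0 : 0 ≤ B := intervalIntegral.integral_nonneg zero_le_one
    fun x _ => Finset.sum_nonneg fun i _ => sq_nonneg _
  have inner_bd : ∀ x ∈ Ioc (0:ℝ) 1,
      |a x ⬝ᵥ ∫ ξ in (0:ℝ)..x, (K x ξ).mulVec (b ξ)|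
        ≤ (M / 2) * ((∑ i, (a x i) ^ 2) + B) := by
    intro x hx
    have hsub : Icc (0:ℝ) x ⊆ Icc 0 1 := Icc_subset_Icc_right hx.2
    have hKx : ContinuousOn (fun ξ => K x ξ) (Icc 0 x) :=
      hKc.comp (f := fun ξ : ℝ => (x, ξ)) (by fun_prop) fun ξ hξ => ⟨hξ.1, hξ.2, hx.2⟩
    have hmv : Continuous fun q : Matrix (Fin n) (Fin p) ℝ × (Fin p → ℝ) => q.1.mulVec q.2 :=
      continuous_fst.matrix_mulVec continuous_snd
    have hf : ContinuousOn (fun ξ => (K x ξ).mulVec (b ξ)) (Icc 0 x) :=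
      hmv.comp_continuousOn (hKx.prodMk (hb.mono hsub))
    have hbx : IntervalIntegrable (fun ξ => ∑ i, (b ξ i) ^ 2) volume 0 x :=
      (hbS.mono hsub).intervalIntegrable_of_Icc hx.1.le
    rw [dot_integral_comm _ _ _ (hf.intervalIntegrable_of_Icc hx.1.le), ← Real.norm_eq_abs]
    have hle := intervalIntegral.norm_integral_le_of_norm_le (μ := volume) hx.1.le
      (f := fun ξ => a x ⬝ᵥ (K x ξ).mulVec (b ξ))
      (g := fun ξ => (M / 2) * ((∑ i, (a x i) ^ 2) + ∑ j, (b ξ j) ^ 2))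
      (Filter.Eventually.of_forall fun ξ hξ =>
        dot_mulVec_bound _ M hM (hKM x ξ hξ.1.le hξ.2 hx.2) _ _)
      ((intervalIntegrable_const.add hbx).const_mul _)
    refine hle.trans ?_
    rw [intervalIntegral.integral_const_mul,
      intervalIntegral.integral_add intervalIntegrable_const hbx,
      intervalIntegral.integral_const, smul_eq_mul, sub_zero]
    have h1 : x * (∑ i, (a x i) ^ 2) ≤ ∑ i, (a x i) ^ 2 :=
      mul_le_of_le_one_left (Finset.sum_nonneg fun i _ => sq_nonneg _) hx.2
    have h2 : (∫ ξ in (0:ℝ)..x, ∑ j, (b ξ j) ^ 2) ≤ B :=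
      intervalIntegral.integral_mono_interval le_rfl hx.1.le hx.2
        (Filter.Eventually.of_forall fun ξ => Finset.sum_nonneg fun i _ => sq_nonneg _) hbI
    exact mul_le_mul_of_nonneg_left (add_le_add h1 h2) (by positivity)
  have hI1 : IntervalIntegrable (fun x => Real.exp (-ν * x) * ∑ i, (a x i) ^ 2) volume 0 1 :=
    (hexp.continuousOn.mul haS).intervalIntegrable_of_Icc zero_le_one
  have hI2 : IntervalIntegrable (fun x => Real.exp (-ν * x) * B) volume 0 1 :=
    (hexp.mul continuous_const).intervalIntegrable _ _
  have hout := intervalIntegral.norm_integral_le_of_norm_le (μ := volume) (zero_le_one' ℝ)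
      (f := fun x => Real.exp (-ν * x) * (a x ⬝ᵥ ∫ ξ in (0:ℝ)..x, (K x ξ).mulVec (b ξ)))
      (g := fun x => (M / 2) * (Real.exp (-ν * x) * (∑ i, (a x i) ^ 2) + Real.exp (-ν * x) * B))
      (Filter.Eventually.of_forall fun x hx => by
        rw [norm_mul, Real.norm_eq_abs, Real.norm_eq_abs, Real.abs_exp]
        have := mul_le_mul_of_nonneg_left (inner_bd x hx) (Real.exp_pos (-ν * x)).le
        linarith)
      ((hI1.add hI2).const_mul _)
  rw [← Real.norm_eq_abs]
  refine hout.trans ?_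
  rw [intervalIntegral.integral_const_mul, intervalIntegral.integral_add hI1 hI2,
    intervalIntegral.integral_mul_const]
  have hE : (∫ x in (0:ℝ)..1, Real.exp (-ν * x)) ≤ 1 / ν := by
    have h : ∀ x ∈ uIcc (0:ℝ) 1,
        HasDerivAt (fun x => -(Real.exp (-ν * x) / ν)) (Real.exp (-ν * x)) x := by
      intro x _
      have h0 : HasDerivAt (fun x : ℝ => -ν * x) (-ν) x := by
        simpa using (hasDerivAt_id x).const_mul (-ν)
      have := (h0.exp.div_const ν).neg
      refine this.congr_deriv ?_
      field_simp
    rw [intervalIntegral.integral_eq_sub_of_hasDerivAt h (hexp.intervalIntegrable _ _)]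
    have : 0 < Real.exp (-ν * 1) / ν := by positivity
    simp only [mul_zero, Real.exp_zero]
    linarith
  exact mul_le_mul_of_nonneg_left
    (add_le_add le_rfl (mul_le_mul_of_nonneg_right hE hB0)) (by positivity)
end
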